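/- In the OMP-step setting, suppose additionally that δ < 1/2 and that the dominance factor satisfies γ > (δ + √(δ² + (1+δ)²)) / (1 − 2δ). Then |u_l| > |u_j| for every index j ≠ l, where u = Aᵀ A x*; consequently the index of the largest-magnitude entry of u is l, which lies in the support S* of the true sparse signal. -/

import Mathlib

/-!
Polarizing the restricted isometry inequalities gives
`|⟪A v, A w⟫ - ⟪v, w⟫| ≤ δ ‖v‖ ‖w‖` whenever `v` and `w` are supported on a common set of at most
`s + 1` indices. Testing against `v = e_l ± e_j`, of norm `√2`, shows that `u_l ± u_j` is within
`√2 δ ‖x‖` of `x_l ± x_j`, so `|u_j| < |u_l|` as soon as `√2 δ ‖x‖ < |x_l| - |x_j|`.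
Both sides are controlled by the norm `b` of `x` off `l`: `|x_j| ≤ b`, `‖x‖² = x_l² + b²` and
`γ b ≤ |x_l|`, which leaves the condition `√2 δ √(γ² + 1) < γ - 1` on the parameters.
-/

open Matrix Finset

/-- The support of a vector, as a `Finset`. -/
noncomputable def suppF {N : ℕ} (x : Fin N → ℝ) : Finset (Fin N) :=
  Finset.univ.filter fun i => x i ≠ 0

/-- The Euclidean norm of the restriction of `v` to the index set `T`. -/
noncomputable def pnorm {N : ℕ} (T : Finset (Fin N)) (v : Fin N → ℝ) : ℝ :=
  Real.sqrt (∑ i ∈ T, v i ^ 2)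

open scoped RealInnerProductSpace

lemma abs_inner_map_sub_inner_le_of_span_pair {E F : Type*} [NormedAddCommGroup E]
    [InnerProductSpace ℝ E] [SeminormedAddCommGroup F] [InnerProductSpace ℝ F]
    (A : E →ₗ[ℝ] F) {δ : ℝ} {v w : E}
    (h : ∀ z ∈ Submodule.span ℝ {v, w},
      (1 - δ) * ‖z‖ ^ 2 ≤ ‖A z‖ ^ 2 ∧ ‖A z‖ ^ 2 ≤ (1 + δ) * ‖z‖ ^ 2) :
    |⟪A v, A w⟫ - ⟪v, w⟫| ≤ δ * (‖v‖ * ‖w‖) := by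
  rcases eq_or_ne v 0 with rfl | hv
  · simp
  rcases eq_or_ne w 0 with rfl | hw
  · simp
  -- The weights `‖w‖` and `± ‖v‖` give both summands the same norm, which makes the bound sharp.
  have hpos : 0 < ‖v‖ * ‖w‖ := mul_pos (norm_pos_iff.mpr hv) (norm_pos_iff.mpr hw)
  have hadd := h _ (Submodule.mem_span_pair.mpr ⟨‖w‖, ‖v‖, rfl⟩)
  have hsub := h _ (Submodule.mem_span_pair.mpr ⟨‖w‖, -‖v‖, rfl⟩)
  simp only [map_add, map_smul, norm_add_sq_real, norm_smul, inner_smul_left, inner_smul_right,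
    mul_pow, norm_neg, norm_norm, conj_trivial] at hadd hsub
  rw [abs_le]
  constructor <;> refine le_of_mul_le_mul_left ?_ hpos <;> linarith

lemma abs_lt_abs_of_abs_add_sub_add_le {G : Type*} [AddCommGroup G] [LinearOrder G]
    [IsOrderedAddMonoid G] {a b c d r : G} (hadd : |(a + b) - (c + d)| ≤ r)
    (hsub : |(a - b) - (c - d)| ≤ r) (h : r < |c| - |d|) : |b| < |a| := by
  grind

lemma mul_sqrt_sq_add_sq_lt_sub {a b r γ : ℝ} (ha : 0 < a) (hr : 0 ≤ r) (hb : 0 ≤ b)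
    (hab : γ * b ≤ a) (hγ : r * √(γ ^ 2 + 1) < γ - 1) : r * √(a ^ 2 + b ^ 2) < a - b := by
  have hγ0 : 0 < γ := by linarith [mul_nonneg hr (Real.sqrt_nonneg (γ ^ 2 + 1))]
  have hnorm : γ * √(a ^ 2 + b ^ 2) ≤ a * √(γ ^ 2 + 1) := by
    refine le_of_sq_le_sq ?_ (by positivity)
    have hsq : (γ * b) ^ 2 ≤ a ^ 2 := by gcongr
    rw [mul_pow, mul_pow, Real.sq_sqrt (by positivity), Real.sq_sqrt (by positivity)]
    linarith
  refine lt_of_mul_lt_mul_left ?_ hγ0.le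
  calc γ * (r * √(a ^ 2 + b ^ 2)) = r * (γ * √(a ^ 2 + b ^ 2)) := by ring
    _ ≤ r * (a * √(γ ^ 2 + 1)) := by gcongr
    _ = a * (r * √(γ ^ 2 + 1)) := by ring
    _ < a * (γ - 1) := by gcongr
    _ ≤ γ * (a - b) := by linarith

lemma sqrt_two_mul_sqrt_sq_add_one_lt_sub_one {δ γ : ℝ} (hδ : 0 ≤ δ) (hδ2 : δ < 1 / 2)
    (hγ : (δ + √(δ ^ 2 + (1 + δ) ^ 2)) / (1 - 2 * δ) < γ) :
    √2 * δ * √(γ ^ 2 + 1) < γ - 1 := by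
  have hsqrt : 1 + δ ≤ √(δ ^ 2 + (1 + δ) ^ 2) := Real.le_sqrt_of_sq_le (by nlinarith)
  have hγδ : 1 + 2 * δ < γ * (1 - 2 * δ) := by
    linarith [(div_lt_iff₀ (by linarith)).mp hγ]
  have hγ0 : 0 < γ := pos_of_mul_pos_left (by linarith) (by linarith : 0 ≤ 1 - 2 * δ)
  calc √2 * δ * √(γ ^ 2 + 1) ≤ 2 * δ * (γ + 1) := by
        gcongr
        · exact Real.sqrt_le_iff.mpr (by norm_num)
        · exact Real.sqrt_le_iff.mpr ⟨by linarith, by linarith [add_sq γ 1]⟩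
    _ < γ - 1 := by linarith

section Coordinates

variable {𝕜 ι : Type*} [RCLike 𝕜] [Fintype ι] [DecidableEq ι] (x : EuclideanSpace 𝕜 ι)

lemma norm_sq_eq_sq_add_norm_sub_single_sq (l : ι) :
    ‖x‖ ^ 2 = ‖x l‖ ^ 2 + ‖x - EuclideanSpace.single l (x l)‖ ^ 2 := by
  have hinner : RCLike.re (inner 𝕜 x (EuclideanSpace.single l (x l))) = ‖x l‖ ^ 2 := by
    rw [EuclideanSpace.inner_single_right, RCLike.mul_conj]
    norm_cast
  rw [norm_sub_sq (𝕜 := 𝕜), hinner, PiLp.norm_single]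
  ring

lemma norm_apply_le_norm_sub_single {j l : ι} (hj : j ≠ l) :
    ‖x j‖ ≤ ‖x - EuclideanSpace.single l (x l)‖ := by
  simpa [hj] using PiLp.norm_apply_le (x - EuclideanSpace.single l (x l)) j

end Coordinates

section RestrictedIsometry

variable {ι F : Type*} [Fintype ι] [SeminormedAddCommGroup F] [InnerProductSpace ℝ F]
  {A : EuclideanSpace ℝ ι →ₗ[ℝ] F} {k s : ℕ} {δ γ : ℝ} {x : EuclideanSpace ℝ ι}

/-- The restricted isometry property of order `k` with constant `δ`, for a linear map into an
arbitrary real inner product space. -/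
def HasRIP (A : EuclideanSpace ℝ ι →ₗ[ℝ] F) (k : ℕ) (δ : ℝ) : Prop :=
  ∀ v : EuclideanSpace ℝ ι, #{i | v i ≠ 0} ≤ k →
    (1 - δ) * ‖v‖ ^ 2 ≤ ‖A v‖ ^ 2 ∧ ‖A v‖ ^ 2 ≤ (1 + δ) * ‖v‖ ^ 2

lemma HasRIP.abs_inner_map_sub_inner_le (hA : HasRIP A k δ) {T : Finset ι} (hT : #T ≤ k)
    {v w : EuclideanSpace ℝ ι} (hv : ∀ i ∉ T, v i = 0) (hw : ∀ i ∉ T, w i = 0) :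
    |⟪A v, A w⟫ - ⟪v, w⟫| ≤ δ * (‖v‖ * ‖w‖) := by
  refine abs_inner_map_sub_inner_le_of_span_pair A fun z hz => hA z ?_
  obtain ⟨a, b, rfl⟩ := Submodule.mem_span_pair.mp hz
  refine (card_le_card fun i hi => ?_).trans hT
  by_contra hiT
  exact (mem_filter_univ i).mp hi (by simp [hv i hiT, hw i hiT])

variable [DecidableEq ι]

lemma norm_single_add_smul_single {j l : ι} (hj : j ≠ l) {t : ℝ} (ht : |t| = 1) :
    ‖EuclideanSpace.single l (1 : ℝ) + t • EuclideanSpace.single j (1 : ℝ)‖ = √2 := by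
  rw [(norm_add_eq_sqrt_iff_real_inner_eq_zero).mpr (by
    simp [inner_smul_right, EuclideanSpace.inner_single_left, hj.symm])]
  simp [norm_smul, ht, one_add_one_eq_two]

lemma HasRIP.abs_inner_map_single_add_sub_le (hA : HasRIP A (s + 1) δ) (hx : #{i | x i ≠ 0} ≤ s)
    {j l : ι} (hj : j ≠ l) (hl : x l ≠ 0) {t : ℝ} (ht : |t| = 1) :
    |(⟪A (EuclideanSpace.single l 1), A x⟫ + t * ⟪A (EuclideanSpace.single j 1), A x⟫)
      - (x l + t * x j)| ≤ √2 * δ * ‖x‖ := by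
  set T : Finset ι := insert j ({i | x i ≠ 0} : Finset ι)
  have hT : #T ≤ s + 1 := (card_insert_le _ _).trans (Nat.add_le_add_right hx 1)
  have hmem {i : ι} (hi : x i ≠ 0) : i ∈ T := mem_insert_of_mem ((mem_filter_univ i).mpr hi)
  have hvT : ∀ i ∉ T,
      (EuclideanSpace.single l (1 : ℝ) + t • EuclideanSpace.single j (1 : ℝ)) i = 0 := by
    intro i hi
    have hij : i ≠ j := ne_of_mem_of_not_mem (mem_insert_self j _) hi |>.symm
    have hil : i ≠ l := ne_of_mem_of_not_mem (hmem hl) hi |>.symm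
    simp [hij, hil]
  have h := hA.abs_inner_map_sub_inner_le hT hvT fun i => not_imp_comm.mp hmem
  rw [norm_single_add_smul_single hj ht, map_add, map_smul] at h
  simpa only [inner_add_left, real_inner_smul_left, EuclideanSpace.inner_single_left, map_one,
    one_mul, mul_left_comm δ, mul_assoc] using h

lemma HasRIP.abs_inner_map_single_lt (hA : HasRIP A (s + 1) δ) (hx : #{i | x i ≠ 0} ≤ s)
    {j l : ι} (hj : j ≠ l) (hl : x l ≠ 0) (hgap : √2 * δ * ‖x‖ < |x l| - |x j|) :
    |⟪A (EuclideanSpace.single j 1), A x⟫| < |⟪A (EuclideanSpace.single l 1), A x⟫| := by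
  have hadd := hA.abs_inner_map_single_add_sub_le hx hj hl (t := 1) (by simp)
  have hsub := hA.abs_inner_map_single_add_sub_le hx hj hl (t := -1) (by simp)
  simp only [one_mul, neg_one_mul, ← sub_eq_add_neg] at hadd hsub
  exact abs_lt_abs_of_abs_add_sub_add_le hadd hsub hgap

theorem stmt19_general (hδ : 0 ≤ δ) (hA : HasRIP A (s + 1) δ) (hx : #{i | x i ≠ 0} ≤ s)
    (hx0 : x ≠ 0) {l : ι} (hdom : γ * ‖x - EuclideanSpace.single l (x l)‖ ≤ |x l|)
    (hγ : √2 * δ * √(γ ^ 2 + 1) < γ - 1) :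
    (∀ j, j ≠ l →
      |⟪A (EuclideanSpace.single j 1), A x⟫| < |⟪A (EuclideanSpace.single l 1), A x⟫|) ∧
      x l ≠ 0 := by
  have hγ0 : 0 < γ := by linarith [show 0 ≤ √2 * δ * √(γ ^ 2 + 1) by positivity]
  have hl : x l ≠ 0 := fun h => by
    have : γ * ‖x‖ ≤ 0 := by simpa [h, (PiLp.single_eq_zero_iff 2 l).mpr] using hdom
    exact this.not_gt (mul_pos hγ0 (norm_pos_iff.mpr hx0))
  refine ⟨fun j hj => hA.abs_inner_map_single_lt hx hj hl ?_, hl⟩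
  calc √2 * δ * ‖x‖
      = √2 * δ * √(|x l| ^ 2 + ‖x - EuclideanSpace.single l (x l)‖ ^ 2) := by
        rw [← Real.norm_eq_abs, ← norm_sq_eq_sq_add_norm_sub_single_sq,
          Real.sqrt_sq (norm_nonneg x)]
    _ < |x l| - ‖x - EuclideanSpace.single l (x l)‖ :=
        mul_sqrt_sq_add_sq_lt_sub (abs_pos.mpr hl) (by positivity) (norm_nonneg _) hdom hγ
    _ ≤ |x l| - |x j| := sub_le_sub_left (norm_apply_le_norm_sub_single x hj) _

end RestrictedIsometry

section Matrix

lemma hasRIP_toEuclideanLin_iff {m n : Type*} [Fintype m] [Fintype n] [DecidableEq n]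
    {A : Matrix m n ℝ} {k : ℕ} {δ : ℝ} :
    HasRIP (toEuclideanLin A) k δ ↔ ∀ v : n → ℝ, #{i | v i ≠ 0} ≤ k →
      (1 - δ) * (∑ i, v i ^ 2) ≤ (∑ r, (A.mulVec v r) ^ 2) ∧
      (∑ r, (A.mulVec v r) ^ 2) ≤ (1 + δ) * (∑ i, v i ^ 2) := by
  simp only [HasRIP, EuclideanSpace.real_norm_sq_eq]
  exact (WithLp.equiv 2 (n → ℝ)).forall_congr_left

lemma transpose_mulVec_mulVec_apply {m n : Type*} [Fintype m] [Fintype n] [DecidableEq n]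
    (A : Matrix m n ℝ) (x : n → ℝ) (j : n) :
    Aᵀ.mulVec (A.mulVec x) j =
      ⟪toEuclideanLin A (EuclideanSpace.single j 1), toEuclideanLin A (WithLp.toLp 2 x)⟫ := by
  calc Aᵀ.mulVec (A.mulVec x) j = A.mulVec x ⬝ᵥ A.col j := dotProduct_comm (A.col j) (A.mulVec x)
    _ = _ := by simp [EuclideanSpace.inner_eq_star_dotProduct]

lemma pnorm_suppF_erase {N : ℕ} (x : Fin N → ℝ) (l : Fin N) :
    pnorm ((suppF x).erase l) x = ‖WithLp.toLp 2 x - EuclideanSpace.single l (x l)‖ := by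
  rw [EuclideanSpace.norm_eq, pnorm]
  congr 1
  refine sum_subset_zero_on_sdiff (subset_univ _) (fun i hi => ?_) (fun i hi => ?_)
  · rcases eq_or_ne i l with rfl | hil
    · simp
    · have hi0 : x i = 0 := by simpa [suppF, hil] using hi
      simp [hil, hi0]
  · simp [ne_of_mem_erase hi]

end Matrix

/-- OMP step: if `δ < 1/2` and `γ > (δ + √(δ² + (1+δ)²)) / (1 - 2δ)`, then
`|u_l| > |u_j|` for every `j ≠ l`; consequently the index of the largest-magnitude
entry of `u` is `l`, which lies in the support `S*` of the true sparse signal. -/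
theorem stmt19 (m N s : ℕ) (hs : 1 ≤ s) (A : Matrix (Fin m) (Fin N) ℝ) (δ γ : ℝ)
    (hδ0 : 0 ≤ δ) (hδ1 : δ < 1) (hγ : 0 < γ)
    (hRIP : ∀ v : Fin N → ℝ, (suppF v).card ≤ s + 1 →
      (1 - δ) * (∑ i, v i ^ 2) ≤ (∑ r, (A.mulVec v r) ^ 2) ∧
      (∑ r, (A.mulVec v r) ^ 2) ≤ (1 + δ) * (∑ i, v i ^ 2))
    (xs : Fin N → ℝ) (hxs : (suppF xs).card ≤ s) (hxsne : xs ≠ 0)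
    (u : Fin N → ℝ) (hu : ∀ j, u j = Aᵀ.mulVec (A.mulVec xs) j)
    (l : Fin N) (hl : ∀ i, |xs i| ≤ |xs l|)
    (hdom : γ * pnorm ((suppF xs).erase l) xs ≤ |xs l|)
    (hδhalf : δ < 1 / 2)
    (hγbig : γ > (δ + Real.sqrt (δ ^ 2 + (1 + δ) ^ 2)) / (1 - 2 * δ)) :
    (∀ j, j ≠ l → |u j| < |u l|) ∧ l ∈ suppF xs := by
  simp only [hu, transpose_mulVec_mulVec_apply, suppF, mem_filter_univ]
  exact stmt19_general hδ0 (hasRIP_toEuclideanLin_iff.mpr hRIP) hxs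
    (by simpa using hxsne) (pnorm_suppF_erase xs l ▸ hdom)
    (sqrt_two_mul_sqrt_sq_add_one_lt_sub_one hδ0 hδhalf hγbig)
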